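/- Two matrices M, N ∈ ℝ^{2×2} are LCP equivalent if M₁₂·N₁₂ > 0, M₂₁·N₂₁ > 0, and det(M_{αα})·det(N_{αα}) > 0 for every α ⊆ {1,2} (where the determinant of the empty principal submatrix is 1, the 1×1 principal minors are the diagonal entries, and det(M_{{1,2}{1,2}}) = det M). -/

import Mathlib

open Matrix

/-- Complementary matrix `C_M(α)`: j-th column is `-M_{·j}` if `j ∈ α`, else `e_j`. -/
def compMat {n : ℕ} (M : Matrix (Fin n) (Fin n) ℝ) (α : Finset (Fin n)) :
    Matrix (Fin n) (Fin n) ℝ :=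
  fun i j => if j ∈ α then -M i j else (if i = j then 1 else 0)

/-- The orthant `pos C_I(α)`: `x_j ≤ 0` for `j ∈ α`, `x_j ≥ 0` otherwise. -/
def orthant {n : ℕ} (α : Finset (Fin n)) : Set (Fin n → ℝ) :=
  {x | ∀ j, if j ∈ α then x j ≤ 0 else 0 ≤ x j}

/-- The cone generated by the columns of `A`. -/
def posCone {n : ℕ} (A : Matrix (Fin n) (Fin n) ℝ) : Set (Fin n → ℝ) :=
  {q | ∃ p : Fin n → ℝ, (∀ j, 0 ≤ p j) ∧ q = A.mulVec p}

/-- The piecewise linear map `f_M`, in closed form: on the orthant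
`pos C_I(α)` this map equals `x ↦ C_{-M}(α) x`. -/
def fpl {n : ℕ} (M : Matrix (Fin n) (Fin n) ℝ) (x : Fin n → ℝ) : Fin n → ℝ :=
  fun i => max (x i) 0 - M.mulVec (fun j => max (-x j) 0) i

/-- `z` solves the LCP `(M, q)`: with `w = Mz + q`, one has `z ≥ 0`, `w ≥ 0`, `wᵀz = 0`. -/
def isLCPsol {ι : Type*} [Fintype ι] (M : Matrix ι ι ℝ) (q z : ι → ℝ) : Prop :=
  (∀ i, 0 ≤ z i) ∧ (∀ i, 0 ≤ (M.mulVec z + q) i) ∧ (∀ i, (M.mulVec z + q) i * z i = 0)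

/-- The field of sets generated by the orthants (being finitely generated,
it coincides with the generated σ-algebra). -/
def orthField (n : ℕ) : MeasurableSpace (Fin n → ℝ) :=
  MeasurableSpace.generateFrom {S | ∃ α : Finset (Fin n), S = orthant α}

/-- `ψ` induces a Boolean automorphism `P ↦ ψ⁻¹(P)` of the field generated by the orthants. -/
def inducesBoolAuto {n : ℕ} (ψ : (Fin n → ℝ) ≃ₜ (Fin n → ℝ)) : Prop :=
  ∀ P : Set (Fin n → ℝ),
    @MeasurableSet _ (orthField n) P ↔ @MeasurableSet _ (orthField n) (⇑ψ ⁻¹' P)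

/-- LCP equivalence: `f_M = φ ∘ f_N ∘ ψ` for homeomorphisms `φ, ψ`, with `ψ`
inducing a Boolean automorphism on the field generated by the orthants. -/
def LCPequiv {n : ℕ} (M N : Matrix (Fin n) (Fin n) ℝ) : Prop :=
  ∃ (φ ψ : (Fin n → ℝ) ≃ₜ (Fin n → ℝ)),
    inducesBoolAuto ψ ∧ fpl M = ⇑φ ∘ fpl N ∘ ⇑ψ

/-!
Each column of `C_{-M}(α)` is a coordinate vector or a column of `M`. In the plane a homeomorphism
`φ` can fix the two coordinate axes and carry the lines through the columns of `N` to the lines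
through the columns of `M`: let it preserve the first coordinate and act on slopes by an increasing
bijection of `ℝ`, which exists because the hypotheses put the slopes `0`, `N₂₁ / N₁₁`, `N₂₂ / N₁₂`
in the same order as `0`, `M₂₁ / M₁₁`, `M₂₂ / M₁₂`. Corresponding columns point to the same side of
the vertical axis, so by Cramer's rule `y` and `φ y` have coordinates of equal signs in the bases
`C_{-N}(α)` and `C_{-M}(α)`, for every `α`. Hence `φ⁻¹ ∘ f_M` lifts through `f_N` on each orthant,
and the lifts preserve the signs of coordinates, so they agree on common faces and glue to the
homeomorphism `ψ`.
-/

open SignType (sign)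
open Filter Set Topology

theorem sign_eq_sign_of_mul_pos {R : Type*} [Ring R] [LinearOrder R] [IsStrictOrderedRing R]
    {a b : R} (h : 0 < a * b) : sign a = sign b := by
  simp only [sign_apply, pos_iff_pos_of_mul_pos h, neg_iff_neg_of_mul_pos h]

theorem sign_sub_eq_of_strictMono {α β : Type*}
    [AddCommGroup α] [LinearOrder α] [IsOrderedAddMonoid α]
    [AddCommGroup β] [LinearOrder β] [IsOrderedAddMonoid β]
    {g : α → β} (hg : StrictMono g) (x y : α) : sign (g x - g y) = sign (x - y) := by
  simp only [sign_apply, sub_pos, sub_neg, hg.lt_iff_lt]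

theorem cramer_fin_two {R : Type*} [CommRing R] (A : Matrix (Fin 2) (Fin 2) R) (b : Fin 2 → R) :
    cramer A b = ![b 0 * A 1 1 - b 1 * A 0 1, -(b 0 * A 1 0 - b 1 * A 0 0)] := by
  ext i
  fin_cases i <;> simp [cramer_apply, det_fin_two] <;> ring

/-! ### The piecewise linear map on orthants -/

section Orthants

variable {n : ℕ} {M N : Matrix (Fin n) (Fin n) ℝ} {α : Finset (Fin n)} {x y : Fin n → ℝ}

theorem isClosed_orthant (α : Finset (Fin n)) : IsClosed (orthant α) := by
  simp only [orthant, ofPred_forall]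
  refine isClosed_iInter fun j => ?_
  split_ifs
  · exact isClosed_le (continuous_apply j) continuous_const
  · exact isClosed_le continuous_const (continuous_apply j)

theorem mem_orthant_filter_nonpos (x : Fin n → ℝ) : x ∈ orthant {j | x j ≤ 0} := by
  intro j
  split_ifs with h
  · simpa using h
  · exact (by simpa using h : 0 < x j).le

theorem iUnion_orthant : ⋃ α : Finset (Fin n), orthant α = univ :=
  eq_univ_of_forall fun x => mem_iUnion.2 ⟨_, mem_orthant_filter_nonpos x⟩

theorem mem_orthant_iff_of_sign_eq (h : ∀ j, sign (x j) = sign (y j)) :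
    x ∈ orthant α ↔ y ∈ orthant α := by
  refine forall_congr' fun j => ?_
  rw [← sign_nonpos_iff, ← sign_nonneg_iff, h j, sign_nonpos_iff, sign_nonneg_iff]

theorem continuous_fpl (M : Matrix (Fin n) (Fin n) ℝ) : Continuous (fpl M) := by
  unfold fpl mulVec dotProduct
  fun_prop

theorem fpl_eq_compMat_neg_mulVec (M : Matrix (Fin n) (Fin n) ℝ) (hx : x ∈ orthant α) :
    fpl M x = compMat (-M) α *ᵥ x := by
  ext i
  have hi : max (x i) 0 = ∑ j, if i = j then max (x j) 0 else 0 := by simp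
  simp only [fpl, hi, mulVec, dotProduct, ← Finset.sum_sub_distrib]
  refine Finset.sum_congr rfl fun j _ => ?_
  have hj := hx j
  by_cases hα : j ∈ α <;> simp only [hα, if_true, if_false] at hj <;>
    simp [compMat, hα, hj]

theorem fpl_injOn_orthant (h : (compMat (-M) α).det ≠ 0) : InjOn (fpl M) (orthant α) := by
  intro x hx y hy hxy
  rw [fpl_eq_compMat_neg_mulVec M hx, fpl_eq_compMat_neg_mulVec M hy] at hxy
  exact mulVec_injective_of_isUnit ((isUnit_iff_isUnit_det _).2 h.isUnit) hxy

theorem inducesBoolAuto_of_sign_eq (ψ : (Fin n → ℝ) ≃ₜ (Fin n → ℝ))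
    (h : ∀ x j, sign (ψ x j) = sign (x j)) : inducesBoolAuto ψ := by
  have preimage_orthant (α) : ψ ⁻¹' orthant α = orthant α :=
    Set.ext fun x => mem_orthant_iff_of_sign_eq (h x)
  have comap_eq : (orthField n).comap ψ = orthField n := by
    rw [orthField, MeasurableSpace.comap_generateFrom]
    congr 1
    ext S
    simp only [mem_image, mem_ofPred_eq]
    constructor
    · rintro ⟨_, ⟨α, rfl⟩, rfl⟩
      exact ⟨α, preimage_orthant α⟩
    · rintro ⟨α, rfl⟩
      exact ⟨_, ⟨α, rfl⟩, preimage_orthant α⟩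
  intro P
  conv_rhs => rw [← comap_eq, MeasurableSpace.measurableSet_comap]
  simp [ψ.surjective.preimage_injective.eq_iff]

end Orthants

/-! ### Lifting a homeomorphism through the piecewise linear maps -/

/-- The homeomorphism `φ` matches the complementary cones of `N` with those of `M`: for every `α`,
the coordinates of `y` in the basis `C_{-N}(α)` have the same signs as the coordinates of `φ y` in
the basis `C_{-M}(α)`. Signs take the value `0`, so corresponding faces are matched as well. -/
structure ComplementaryConeMatch {n : ℕ} (φ : (Fin n → ℝ) ≃ₜ (Fin n → ℝ))
    (M N : Matrix (Fin n) (Fin n) ℝ) : Prop where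
  det_left_ne_zero : ∀ α, (compMat (-M) α).det ≠ 0
  det_right_ne_zero : ∀ α, (compMat (-N) α).det ≠ 0
  sign_coord : ∀ α y j, sign (((compMat (-M) α)⁻¹ *ᵥ φ y) j) = sign (((compMat (-N) α)⁻¹ *ᵥ y) j)

namespace ComplementaryConeMatch

variable {n : ℕ} {φ : (Fin n → ℝ) ≃ₜ (Fin n → ℝ)} {M N : Matrix (Fin n) (Fin n) ℝ}

theorem of_sign_cramer
    (hdet : ∀ α, 0 < (compMat (-M) α).det * (compMat (-N) α).det)
    (hsign : ∀ α y j,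
      sign (cramer (compMat (-M) α) (φ y) j) = sign (cramer (compMat (-N) α) y j)) :
    ComplementaryConeMatch φ M N where
  det_left_ne_zero α := left_ne_zero_of_mul (hdet α).ne'
  det_right_ne_zero α := right_ne_zero_of_mul (hdet α).ne'
  sign_coord α y j := by
    have hM := left_ne_zero_of_mul (hdet α).ne'
    have hN := right_ne_zero_of_mul (hdet α).ne'
    have h := hsign α y j
    rw [← det_smul_inv_mulVec_eq_cramer _ _ hM.isUnit,
      ← det_smul_inv_mulVec_eq_cramer _ _ hN.isUnit, Pi.smul_apply, Pi.smul_apply,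
      smul_eq_mul, smul_eq_mul, sign_mul, sign_mul,
      sign_eq_sign_of_mul_pos (hdet α)] at h
    exact mul_left_cancel₀ (sign_ne_zero.2 hN) h

theorem symm (h : ComplementaryConeMatch φ M N) : ComplementaryConeMatch φ.symm N M where
  det_left_ne_zero := h.det_right_ne_zero
  det_right_ne_zero := h.det_left_ne_zero
  sign_coord α y j := by rw [← h.sign_coord, φ.apply_symm_apply]

/-- The map `ψ` with `f_M = φ ∘ f_N ∘ ψ`, obtained by inverting `f_N` on the orthant of `x`. For `x`
on several orthants one of them is chosen; `lift_eq_of_mem_orthant` shows that the choice is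
immaterial. -/
noncomputable def lift (φ : (Fin n → ℝ) ≃ₜ (Fin n → ℝ)) (M N : Matrix (Fin n) (Fin n) ℝ)
    (x : Fin n → ℝ) : Fin n → ℝ :=
  (compMat (-N) {j | x j ≤ 0})⁻¹ *ᵥ φ.symm (fpl M x)

theorem sign_lift (h : ComplementaryConeMatch φ M N) (x : Fin n → ℝ) (j : Fin n) :
    sign (lift φ M N x j) = sign (x j) := by
  have hM := (h.det_left_ne_zero {j | x j ≤ 0}).isUnit
  rw [lift, ← h.sign_coord, φ.apply_symm_apply,
    fpl_eq_compMat_neg_mulVec M (mem_orthant_filter_nonpos x), mulVec_mulVec,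
    nonsing_inv_mul _ hM, one_mulVec]

theorem lift_mem_orthant_iff (h : ComplementaryConeMatch φ M N) {α : Finset (Fin n)}
    {x : Fin n → ℝ} : lift φ M N x ∈ orthant α ↔ x ∈ orthant α :=
  mem_orthant_iff_of_sign_eq (h.sign_lift x)

theorem fpl_lift (h : ComplementaryConeMatch φ M N) (x : Fin n → ℝ) :
    fpl N (lift φ M N x) = φ.symm (fpl M x) := by
  rw [fpl_eq_compMat_neg_mulVec N (h.lift_mem_orthant_iff.2 (mem_orthant_filter_nonpos x)), lift,
    mulVec_mulVec, mul_nonsing_inv _ (h.det_right_ne_zero _).isUnit, one_mulVec]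

theorem lift_eq_of_mem_orthant (h : ComplementaryConeMatch φ M N) {α : Finset (Fin n)}
    {x : Fin n → ℝ} (hx : x ∈ orthant α) :
    lift φ M N x = (compMat (-N) α)⁻¹ *ᵥ φ.symm (fpl M x) := by
  rw [← h.fpl_lift, fpl_eq_compMat_neg_mulVec N (h.lift_mem_orthant_iff.2 hx), mulVec_mulVec,
    nonsing_inv_mul _ (h.det_right_ne_zero α).isUnit, one_mulVec]

theorem continuous_lift (h : ComplementaryConeMatch φ M N) : Continuous (lift φ M N) := by
  refine (locallyFinite_of_finite orthant).continuous iUnion_orthant isClosed_orthant fun α => ?_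
  have : Continuous fun x => (compMat (-N) α)⁻¹ *ᵥ φ.symm (fpl M x) :=
    continuous_const.matrix_mulVec (φ.symm.continuous.comp (continuous_fpl M))
  exact this.continuousOn.congr fun x hx => h.lift_eq_of_mem_orthant hx

theorem lift_symm_lift (h : ComplementaryConeMatch φ M N) (x : Fin n → ℝ) :
    lift φ.symm N M (lift φ M N x) = x := by
  have hx := mem_orthant_filter_nonpos x
  refine fpl_injOn_orthant (h.det_left_ne_zero _)
    (h.symm.lift_mem_orthant_iff.2 (h.lift_mem_orthant_iff.2 hx)) hx ?_
  rw [h.symm.fpl_lift, h.fpl_lift, φ.symm_symm, φ.apply_symm_apply]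

/-- The homeomorphism `ψ` with `f_M = φ ∘ f_N ∘ ψ`. -/
noncomputable def liftHomeomorph (h : ComplementaryConeMatch φ M N) :
    (Fin n → ℝ) ≃ₜ (Fin n → ℝ) where
  toFun := lift φ M N
  invFun := lift φ.symm N M
  left_inv := h.lift_symm_lift
  right_inv := h.symm.lift_symm_lift
  continuous_toFun := h.continuous_lift
  continuous_invFun := h.symm.continuous_lift

theorem lcpEquiv (h : ComplementaryConeMatch φ M N) : LCPequiv M N := by
  refine ⟨φ, h.liftHomeomorph, inducesBoolAuto_of_sign_eq _ h.sign_lift, funext fun x => ?_⟩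
  exact ((congrArg φ (h.fpl_lift x)).trans (φ.apply_symm_apply _)).symm

end ComplementaryConeMatch

/-! ### Order automorphisms of the line -/

theorem surjective_of_continuous_of_abs_sub_le {f : ℝ → ℝ} (hf : Continuous f) {C : ℝ}
    (hC : ∀ x, |f x - x| ≤ C) : Function.Surjective f := by
  refine hf.surjective
    (tendsto_atTop_mono (fun x => ?_) (tendsto_atTop_add_const_right _ (-C) tendsto_id))
    (tendsto_atBot_mono (fun x => ?_) (tendsto_atBot_add_const_right _ C tendsto_id))
  all_goals
    have := abs_le.1 (hC x)
    simp only [id_eq]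
    linarith

/-- The group of order automorphisms `g` of `ℝ` with `g x - x` bounded. Boundedness makes the action
of `g` on slopes extend continuously to the vertical axis, see `slopeHomeomorph`. -/
def boundedDisplacement : Subgroup (ℝ ≃o ℝ) where
  carrier := {g | ∃ C, ∀ x, |g x - x| ≤ C}
  one_mem' := ⟨0, by simp⟩
  mul_mem' := by
    rintro g h ⟨C, hC⟩ ⟨D, hD⟩
    exact ⟨C + D, fun x => (abs_sub_le _ (h x) _).trans (add_le_add (hC _) (hD _))⟩
  inv_mem' := by
    rintro g ⟨C, hC⟩
    refine ⟨C, fun x => ?_⟩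
    simpa only [RelIso.apply_inv_self, abs_sub_comm] using hC (g⁻¹ x)

theorem exists_boundedDisplacement_eqOn_Iic {c u v : ℝ} (hu : c < u) (hv : c < v) :
    ∃ g ∈ boundedDisplacement, EqOn g id (Iic c) ∧ g u = v := by
  wlog huv : u ≤ v generalizing u v
  · obtain ⟨g, hg, hgc, hgv⟩ := this hv hu (le_of_not_ge huv)
    refine ⟨g⁻¹, inv_mem hg, fun x hx => ?_, ?_⟩
    · exact g.symm_apply_eq.2 (hgc hx).symm
    · exact g.symm_apply_eq.2 hgv.symm
  set ramp : ℝ → ℝ := fun x => max 0 (min 1 ((x - c) / (u - c))) with ramp_def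
  have ramp_mono : Monotone ramp := fun x y hxy => by
    have : 0 < u - c := sub_pos.2 hu
    simp only [ramp_def]
    gcongr
  have ramp_nonneg (x) : 0 ≤ ramp x := le_max_left _ _
  have ramp_le_one (x) : ramp x ≤ 1 := max_le zero_le_one (min_le_left _ _)
  have ramp_of_le {x} (hx : x ≤ c) : ramp x = 0 :=
    max_eq_left <| (min_le_right _ _).trans <|
      div_nonpos_of_nonpos_of_nonneg (sub_nonpos.2 hx) (sub_pos.2 hu).le
  have ramp_u : ramp u = 1 := by simp [ramp_def, div_self (sub_pos.2 hu).ne']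
  set G : ℝ → ℝ := fun x => x + (v - u) * ramp x with G_def
  have G_strictMono : StrictMono G :=
    strictMono_id.add_monotone (ramp_mono.const_mul (sub_nonneg.2 huv))
  have G_bounded (x) : |G x - x| ≤ v - u := by
    rw [G_def, add_sub_cancel_left, abs_of_nonneg (mul_nonneg (sub_nonneg.2 huv) (ramp_nonneg x))]
    exact mul_le_of_le_one_right (sub_nonneg.2 huv) (ramp_le_one x)
  have G_continuous : Continuous G := by fun_prop
  refine ⟨G_strictMono.orderIsoOfSurjective G
    (surjective_of_continuous_of_abs_sub_le G_continuous G_bounded), ⟨v - u, G_bounded⟩, ?_, ?_⟩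
  · intro x hx
    simp [G_def, ramp_of_le hx]
  · simp [G_def, ramp_u]

theorem exists_boundedDisplacement_eqOn_finset (s : Finset ℝ) {f : ℝ → ℝ}
    (hf : StrictMonoOn f s) : ∃ g ∈ boundedDisplacement, EqOn g f s := by
  induction s using Finset.induction_on_max with
  | empty => exact ⟨1, one_mem _, by simp⟩
  | insert q s hq ih =>
    obtain ⟨g, hg, hgf⟩ := ih (hf.mono (by simp))
    have lt_targets : ∀ y ∈ s.image f, ∀ z ∈ ({g q, f q} : Finset ℝ), y < z := by
      simp only [Finset.forall_mem_image, Finset.mem_insert, Finset.mem_singleton, forall_eq_or_imp,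
        forall_eq]
      refine fun x hx => ⟨?_, hf (by simp [hx]) (by simp) (hq x hx)⟩
      rw [← hgf hx]
      exact g.strictMono (hq x hx)
    obtain ⟨c, hsc, hcq⟩ := Order.exists_between_finsets _ _ lt_targets
    obtain ⟨h, hh, hhc, hhq⟩ :=
      exists_boundedDisplacement_eqOn_Iic (hcq (g q) (by simp)) (hcq (f q) (by simp))
    refine ⟨h * g, mul_mem hh hg, fun x hx => ?_⟩
    rw [RelIso.mul_apply]
    rcases Finset.mem_insert.1 hx with rfl | hx
    · exact hhq
    · rw [hgf hx]
      exact hhc (hsc _ (Finset.mem_image_of_mem f hx)).le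

theorem exists_boundedDisplacement_of_mul_pos {a b a' b' : ℝ} (ha : 0 < a * a') (hb : 0 < b * b')
    (hab : 0 < (b - a) * (b' - a')) :
    ∃ g ∈ boundedDisplacement, g 0 = 0 ∧ g a = a' ∧ g b = b' := by
  have ha0 : a ≠ 0 := left_ne_zero_of_mul ha.ne'
  have hb0 : b ≠ 0 := left_ne_zero_of_mul hb.ne'
  have hne : a ≠ b := (sub_ne_zero.1 (left_ne_zero_of_mul hab.ne')).symm
  set f : ℝ → ℝ := Function.update (Function.update 0 a a') b b' with f_def
  have f_zero : f 0 = 0 := by simp [f_def, ha0.symm, hb0.symm]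
  have f_a : f a = a' := by simp [f_def, hne]
  have f_b : f b = b' := by simp [f_def]
  have f_strictMonoOn : StrictMonoOn f ({0, a, b} : Finset ℝ) := by
    have := pos_iff_pos_of_mul_pos ha
    have := neg_iff_neg_of_mul_pos ha
    have := pos_iff_pos_of_mul_pos hb
    have := neg_iff_neg_of_mul_pos hb
    have := pos_iff_pos_of_mul_pos hab
    have := neg_iff_neg_of_mul_pos hab
    intro x hx y hy hxy
    simp only [Finset.coe_insert, Finset.coe_singleton, mem_insert_iff, mem_singleton_iff] at hx hy
    grind
  obtain ⟨g, hg, hgf⟩ := exists_boundedDisplacement_eqOn_finset _ f_strictMonoOn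
  exact ⟨g, hg, (hgf (by simp)).trans f_zero, (hgf (by simp)).trans f_a, (hgf (by simp)).trans f_b⟩

theorem exists_boundedDisplacement_slopes {M N : Matrix (Fin 2) (Fin 2) ℝ}
    (h12 : 0 < M 0 1 * N 0 1) (h21 : 0 < M 1 0 * N 1 0)
    (h11 : 0 < M 0 0 * N 0 0) (h22 : 0 < M 1 1 * N 1 1) (hdet : 0 < M.det * N.det) :
    ∃ g ∈ boundedDisplacement, g 0 = 0 ∧ g (N 1 0 / N 0 0) = M 1 0 / M 0 0 ∧
      g (N 1 1 / N 0 1) = M 1 1 / M 0 1 := by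
  have m00 : M 0 0 ≠ 0 := left_ne_zero_of_mul h11.ne'
  have n00 : N 0 0 ≠ 0 := right_ne_zero_of_mul h11.ne'
  have m01 : M 0 1 ≠ 0 := left_ne_zero_of_mul h12.ne'
  have n01 : N 0 1 ≠ 0 := right_ne_zero_of_mul h12.ne'
  apply exists_boundedDisplacement_of_mul_pos
  · rw [div_mul_div_comm, mul_comm (N 1 0), mul_comm (N 0 0)]
    exact div_pos h21 h11
  · rw [div_mul_div_comm, mul_comm (N 1 1), mul_comm (N 0 1)]
    exact div_pos h22 h12
  · have slope_sub_mul_slope_sub :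
        (N 1 1 / N 0 1 - N 1 0 / N 0 0) * (M 1 1 / M 0 1 - M 1 0 / M 0 0) =
          M.det * N.det / ((M 0 0 * N 0 0) * (M 0 1 * N 0 1)) := by
      rw [det_fin_two, det_fin_two]
      field_simp
    rw [slope_sub_mul_slope_sub]
    exact div_pos hdet (mul_pos h11 h12)

/-! ### The action on slopes -/

theorem continuous_mul_comp_div {X : Type*} [TopologicalSpace X] {d : ℝ → ℝ} (hd : Continuous d)
    {C : ℝ} (hC : ∀ t, |d t| ≤ C) {p q : X → ℝ} (hp : Continuous p) (hq : Continuous q) :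
    Continuous fun x => q x * d (p x / q x) := by
  refine continuous_iff_continuousAt.2 fun x => ?_
  by_cases hx : q x = 0
  · have hq0 : Tendsto q (𝓝 x) (𝓝 0) := hx ▸ hq.tendsto x
    have hbdd : IsBoundedUnder (· ≤ ·) (𝓝 x) (norm ∘ fun y => d (p y / q y)) :=
      isBoundedUnder_of ⟨C, fun y => hC _⟩
    simpa only [ContinuousAt, hx, zero_mul] using hq0.zero_mul_isBoundedUnder_le hbdd
  · exact hq.continuousAt.mul
      (hd.continuousAt.comp (hp.continuousAt.div hq.continuousAt hx))

/-- The map of the plane preserving the first coordinate and acting on slopes by `g`, that is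
`(a, b) ↦ (a, a * g (b / a))` for `a ≠ 0`. It is written so that the junk value `b / 0 = 0` makes
it the identity on the vertical axis. -/
noncomputable def slopeMap (g : ℝ → ℝ) (y : Fin 2 → ℝ) : Fin 2 → ℝ :=
  ![y 0, y 1 + y 0 * (g (y 1 / y 0) - y 1 / y 0)]

theorem slopeMap_of_eq_zero (g : ℝ → ℝ) {y : Fin 2 → ℝ} (h : y 0 = 0) : slopeMap g y = y := by
  ext i
  fin_cases i <;> simp [slopeMap, h]

theorem slopeMap_of_ne_zero (g : ℝ → ℝ) {y : Fin 2 → ℝ} (h : y 0 ≠ 0) :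
    slopeMap g y = ![y 0, y 0 * g (y 1 / y 0)] := by
  rw [slopeMap, mul_sub, mul_div_cancel₀ _ h, add_sub_cancel]

theorem leftInverse_slopeMap {g k : ℝ → ℝ} (h : Function.LeftInverse k g) :
    Function.LeftInverse (slopeMap k) (slopeMap g) := by
  intro y
  by_cases hy : y 0 = 0
  · rw [slopeMap_of_eq_zero g hy, slopeMap_of_eq_zero k hy]
  · rw [slopeMap_of_ne_zero g hy, slopeMap_of_ne_zero k (by exact hy)]
    ext i
    fin_cases i <;> simp [hy, h _, mul_div_cancel₀]

theorem continuous_slopeMap {g : ℝ ≃o ℝ} (hg : g ∈ boundedDisplacement) :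
    Continuous (slopeMap g) := by
  obtain ⟨C, hC⟩ := hg
  have correction_continuous : Continuous fun y : Fin 2 → ℝ =>
      y 0 * (g (y 1 / y 0) - y 1 / y 0) :=
    continuous_mul_comp_div (g.continuous.sub continuous_id) hC (continuous_apply 1)
      (continuous_apply 0)
  exact continuous_pi (Fin.forall_fin_two.2
    ⟨continuous_apply 0, (continuous_apply 1).add correction_continuous⟩)

/-- The homeomorphism of the plane acting on slopes by an order automorphism of `ℝ` with bounded
displacement. -/
noncomputable def slopeHomeomorph {g : ℝ ≃o ℝ} (hg : g ∈ boundedDisplacement) :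
    (Fin 2 → ℝ) ≃ₜ (Fin 2 → ℝ) where
  toFun := slopeMap g
  invFun := slopeMap g.symm
  left_inv := leftInverse_slopeMap g.symm_apply_apply
  right_inv := leftInverse_slopeMap g.apply_symm_apply
  continuous_toFun := continuous_slopeMap hg
  continuous_invFun := continuous_slopeMap (inv_mem hg)

theorem sign_det_slopeMap {g : ℝ → ℝ} (hg : StrictMono g) {a b c d : ℝ} (hac : 0 < a * c)
    (hslope : g (d / c) = b / a) (y : Fin 2 → ℝ) :
    sign (slopeMap g y 0 * b - slopeMap g y 1 * a) = sign (y 0 * d - y 1 * c) := by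
  have ha : a ≠ 0 := left_ne_zero_of_mul hac.ne'
  have hc : c ≠ 0 := right_ne_zero_of_mul hac.ne'
  by_cases hy : y 0 = 0
  · rw [slopeMap_of_eq_zero g hy, hy, zero_mul, zero_mul, zero_sub, zero_sub, Left.sign_neg,
      Left.sign_neg, sign_mul, sign_mul, sign_eq_sign_of_mul_pos hac]
  · have left_eq : slopeMap g y 0 * b - slopeMap g y 1 * a =
        y 0 * a * (g (d / c) - g (y 1 / y 0)) := by
      rw [slopeMap_of_ne_zero g hy, hslope, cons_val_zero, cons_val_one, cons_val_zero]
      field_simp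
    have right_eq : y 0 * d - y 1 * c = y 0 * c * (d / c - y 1 / y 0) := by field_simp
    rw [left_eq, right_eq, sign_mul, sign_mul, sign_mul, sign_mul, sign_eq_sign_of_mul_pos hac,
      sign_sub_eq_of_strictMono hg]

theorem sign_slopeMap_one {g : ℝ → ℝ} (hg : StrictMono g) (hg0 : g 0 = 0) (y : Fin 2 → ℝ) :
    sign (slopeMap g y 1) = sign (y 1) := by
  have := sign_det_slopeMap hg (a := 1) (b := 0) (c := 1) (d := 0) (by simp) (by simpa using hg0) y
  simpa [Left.sign_neg] using this

theorem complementaryConeMatch_slopeHomeomorph {M N : Matrix (Fin 2) (Fin 2) ℝ} {g : ℝ ≃o ℝ}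
    (hg : g ∈ boundedDisplacement) (hg0 : g 0 = 0)
    (hg1 : g (N 1 0 / N 0 0) = M 1 0 / M 0 0) (hg2 : g (N 1 1 / N 0 1) = M 1 1 / M 0 1)
    (h12 : 0 < M 0 1 * N 0 1) (h11 : 0 < M 0 0 * N 0 0) (h22 : 0 < M 1 1 * N 1 1)
    (hdet : 0 < M.det * N.det) : ComplementaryConeMatch (slopeHomeomorph hg) M N := by
  have column_sign (α) (y : Fin 2 → ℝ) : ∀ j,
      sign (slopeMap g y 0 * compMat (-M) α 1 j - slopeMap g y 1 * compMat (-M) α 0 j) =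
        sign (y 0 * compMat (-N) α 1 j - y 1 * compMat (-N) α 0 j) := by
    refine Fin.forall_fin_two.2 ⟨?_, ?_⟩
    · by_cases h0 : 0 ∈ α
      · simpa [compMat, h0] using sign_det_slopeMap g.strictMono h11 hg1 y
      · simpa [compMat, h0, Left.sign_neg] using sign_slopeMap_one g.strictMono hg0 y
    · by_cases h1 : 1 ∈ α
      · simpa [compMat, h1] using sign_det_slopeMap g.strictMono h12 hg2 y
      · simp [compMat, h1, slopeMap]
  refine .of_sign_cramer (fun α => ?_) (fun α y j => ?_)
  · rw [det_fin_two, det_fin_two] at hdet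
    by_cases h0 : 0 ∈ α <;> by_cases h1 : 1 ∈ α <;>
      simp [det_fin_two, compMat, h0, h1, h11, h22, hdet]
  · change sign (cramer (compMat (-M) α) (slopeMap g y) j) = _
    fin_cases j
    · simpa [cramer_fin_two] using column_sign α y 1
    · simpa only [cramer_fin_two, Fin.mk_one, cons_val_one, cons_val_zero, Left.sign_neg, neg_inj]
        using column_sign α y 0

theorem stmt_14 (M N : Matrix (Fin 2) (Fin 2) ℝ)
    (h12 : 0 < M 0 1 * N 0 1) (h21 : 0 < M 1 0 * N 1 0)
    (h11 : 0 < M 0 0 * N 0 0) (h22 : 0 < M 1 1 * N 1 1)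
    (hdet : 0 < M.det * N.det) : LCPequiv M N := by
  obtain ⟨g, hg, hg0, hg1, hg2⟩ := exists_boundedDisplacement_slopes h12 h21 h11 h22 hdet
  exact (complementaryConeMatch_slopeHomeomorph hg hg0 hg1 hg2 h12 h11 h22 hdet).lcpEquiv
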